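/- arXiv:1608.06353 — 4 statements merged into one kernel-verified Lean document; each statement's English description precedes it below -/
import Mathlib

section
/- Let M be a topological space and ≪ a binary relation on M whose graph {(x,y) ∈ M × M : x ≪ y} is open in the product topology. Let (A_k)_{k∈ℕ} be a sequence of achronal subsets of M, i.e. for each k there are no x, y ∈ A_k with x ≪ y. Then the Hausdorff lower limit of (A_k) is achronal; in particular, if the Hausdorff closed limit of (A_k) exists, it is achronal. -/
/-- The Hausdorff upper limit of a sequence of subsets: the set of points every
neighborhood of which meets `S k` for infinitely many `k`. -/
def hausdorffUpperLimit {M : Type*} [TopologicalSpace M] (S : ℕ → Set M) : Set M :=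
  {p | ∀ U ∈ nhds p, {k : ℕ | (U ∩ S k).Nonempty}.Infinite}

/-- The Hausdorff lower limit of a sequence of subsets: the set of points every
neighborhood of which meets `S k` for all but finitely many `k`. -/
def hausdorffLowerLimit {M : Type*} [TopologicalSpace M] (S : ℕ → Set M) : Set M :=
  {p | ∀ U ∈ nhds p, {k : ℕ | ¬ (U ∩ S k).Nonempty}.Finite}

/-- A set is achronal (w.r.t. a relation `r`) if no two of its points are related. -/
def Achronal {M : Type*} (r : M → M → Prop) (A : Set M) : Prop :=
  ∀ x ∈ A, ∀ y ∈ A, ¬ r x y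

/-!
A set `A` is achronal exactly when `A ×ˢ A` lies in the complement of the graph of the relation,
which is closed in `M × M`. Lower limits commute with products, and a lower limit of sets lies in
every closed set that contains infinitely many of them.
-/

open Filter Topology

section LowerLimit

variable {M N : Type*} [TopologicalSpace M] [TopologicalSpace N]

theorem mem_hausdorffLowerLimit_iff_eventually {S : ℕ → Set M} {p : M} :
    p ∈ hausdorffLowerLimit S ↔ ∀ U ∈ 𝓝 p, ∀ᶠ k in atTop, (U ∩ S k).Nonempty := by
  simp only [← Nat.cofinite_eq_atTop]
  rfl

theorem hausdorffLowerLimit_prod (S : ℕ → Set M) (T : ℕ → Set N) :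
    hausdorffLowerLimit (fun k => S k ×ˢ T k) =
      hausdorffLowerLimit S ×ˢ hausdorffLowerLimit T := by
  ext ⟨x, y⟩
  simp only [Set.mem_prod, mem_hausdorffLowerLimit_iff_eventually]
  constructor
  · intro h
    constructor
    · intro U hU
      filter_upwards [h _ (prod_mem_nhds hU univ_mem)] with k hk
      rw [Set.prod_inter_prod] at hk
      exact hk.fst
    · intro V hV
      filter_upwards [h _ (prod_mem_nhds univ_mem hV)] with k hk
      rw [Set.prod_inter_prod] at hk
      exact hk.snd
  · rintro ⟨hx, hy⟩ W hW
    obtain ⟨U, hU, V, hV, hUV⟩ := mem_nhds_prod_iff.1 hW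
    filter_upwards [hx U hU, hy V hV] with k hkU hkV
    have hbox : (U ×ˢ V ∩ S k ×ˢ T k).Nonempty := by
      rw [Set.prod_inter_prod]
      exact hkU.prod hkV
    exact hbox.mono (Set.inter_subset_inter_left _ hUV)

theorem hausdorffLowerLimit_subset_of_isClosed {S : ℕ → Set M} {C : Set M} (hC : IsClosed C)
    (hS : ∃ᶠ k in atTop, S k ⊆ C) : hausdorffLowerLimit S ⊆ C := by
  intro p hp
  by_contra hpC
  have hmeets : ∀ᶠ k in atTop, (Cᶜ ∩ S k).Nonempty :=
    mem_hausdorffLowerLimit_iff_eventually.1 hp _ (hC.isOpen_compl.mem_nhds hpC)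
  obtain ⟨k, hkC, q, hqC, hqS⟩ := (hS.and_eventually hmeets).exists
  exact hqC (hkC hqS)

end LowerLimit

theorem achronal_iff_prod_subset_compl {M : Type*} {r : M → M → Prop} {A : Set M} :
    Achronal r A ↔ A ×ˢ A ⊆ {p : M × M | r p.1 p.2}ᶜ :=
  ⟨fun h p hp => h p.1 hp.1 p.2 hp.2, fun h _ hx _ hy => h (Set.mk_mem_prod hx hy)⟩

theorem achronal_hausdorffLowerLimit_general {M : Type*} [TopologicalSpace M]
    {r : M → M → Prop} (hopen : IsOpen {p : M × M | r p.1 p.2})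
    {A : ℕ → Set M} (hach : ∃ᶠ k in atTop, Achronal r (A k)) :
    Achronal r (hausdorffLowerLimit A) := by
  simp only [achronal_iff_prod_subset_compl] at hach ⊢
  rw [← hausdorffLowerLimit_prod]
  exact hausdorffLowerLimit_subset_of_isClosed hopen.isClosed_compl hach

theorem achronal_hausdorffLowerLimit {M : Type*} [TopologicalSpace M]
    (r : M → M → Prop) (hopen : IsOpen {p : M × M | r p.1 p.2})
    (A : ℕ → Set M) (hach : ∀ k, Achronal r (A k)) :
    Achronal r (hausdorffLowerLimit A) ∧
      (hausdorffUpperLimit A = hausdorffLowerLimit A →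
        Achronal r (hausdorffUpperLimit A)) := by
  have hlower : Achronal r (hausdorffLowerLimit A) :=
    achronal_hausdorffLowerLimit_general hopen (Frequently.of_forall hach)
  exact ⟨hlower, fun hlim => hlim ▸ hlower⟩
end

section
/- Let M be a topological space and ≪ a binary relation on M whose graph is open in M × M, which is future-dense (every x lies in the closure of I⁺(x) = {y : x ≪ y}) and past-dense (every x lies in the closure of I⁻(x) = {y : y ≪ x}). Suppose Q ⊆ M satisfies I⁻(Q) ⊆ Q, where I⁻(Q) = {x : ∃ q ∈ Q, x ≪ q}. Then the interior of Q equals I⁻(Q), and the topological boundary of Q equals the topological boundary of I⁻(Q). -/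
/-!
The past of `Q` is a union of pasts of points, hence open, so `Iminus r Q ⊆ Q` puts it inside
`interior Q`. Conversely, by future-density the neighbourhood `interior Q` of one of its points `x`
meets the future of `x`, so `x` lies in the past of `Q`. Past-density makes each point of `Q` a
limit of points of its own past, so `Q` and `Iminus r Q` also have the same closure.
-/

/-- The timelike past of a set `S`: all points related to some point of `S`. -/
def Iminus {M : Type*} (r : M → M → Prop) (S : Set M) : Set M :=
  {x | ∃ s ∈ S, r x s}

section Iminus

variable {M : Type*} {r : M → M → Prop} {S : Set M}

theorem Iminus_eq_biUnion : Iminus r S = ⋃ s ∈ S, {x | r x s} := by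
  ext x
  simp only [Iminus, Set.mem_ofPred_eq, Set.mem_iUnion, exists_prop]

variable [TopologicalSpace M]

theorem isOpen_Iminus (hopen : ∀ s ∈ S, IsOpen {x | r x s}) : IsOpen (Iminus r S) := by
  rw [Iminus_eq_biUnion]
  exact isOpen_biUnion hopen

theorem interior_subset_Iminus (hfd : ∀ x ∈ interior S, x ∈ closure {y | r x y}) :
    interior S ⊆ Iminus r S := by
  intro x hx
  obtain ⟨y, hyS, hxy⟩ := mem_closure_iff.mp (hfd x hx) _ isOpen_interior hx
  exact ⟨y, interior_subset hyS, hxy⟩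

theorem subset_closure_Iminus (hpd : ∀ x ∈ S, x ∈ closure {y | r y x}) :
    S ⊆ closure (Iminus r S) := by
  intro x hx
  have past_subset : {y | r y x} ⊆ Iminus r S := fun _ hyx => ⟨x, hx, hyx⟩
  exact closure_mono past_subset (hpd x hx)

theorem interior_eq_Iminus (hopen : ∀ s ∈ S, IsOpen {x | r x s})
    (hfd : ∀ x ∈ interior S, x ∈ closure {y | r x y}) (hS : Iminus r S ⊆ S) :
    interior S = Iminus r S :=
  (interior_subset_Iminus hfd).antisymm (interior_maximal hS (isOpen_Iminus hopen))

theorem closure_eq_closure_Iminus (hpd : ∀ x ∈ S, x ∈ closure {y | r y x})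
    (hS : Iminus r S ⊆ S) : closure S = closure (Iminus r S) :=
  (closure_minimal (subset_closure_Iminus hpd) isClosed_closure).antisymm (closure_mono hS)

theorem interior_eq_Iminus_of_pastConvex_general (hopen : ∀ s ∈ S, IsOpen {x | r x s})
    (hfd : ∀ x ∈ interior S, x ∈ closure {y | r x y})
    (hpd : ∀ x ∈ S, x ∈ closure {y | r y x}) (hS : Iminus r S ⊆ S) :
    interior S = Iminus r S ∧ frontier S = frontier (Iminus r S) := by
  have hint : interior S = Iminus r S := interior_eq_Iminus hopen hfd hS
  have hcl : closure S = closure (Iminus r S) := closure_eq_closure_Iminus hpd hS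
  refine ⟨hint, ?_⟩
  calc frontier S = closure (Iminus r S) \ Iminus r S := by rw [frontier, hcl, hint]
    _ = frontier (Iminus r S) := (isOpen_Iminus hopen).frontier_eq.symm

end Iminus

theorem interior_eq_Iminus_of_pastConvex {M : Type*} [TopologicalSpace M]
    (r : M → M → Prop)
    (hopen : IsOpen {p : M × M | r p.1 p.2})
    (hfd : ∀ x : M, x ∈ closure {y | r x y})
    (hpd : ∀ x : M, x ∈ closure {y | r y x})
    (Q : Set M) (hQ : Iminus r Q ⊆ Q) :
    interior Q = Iminus r Q ∧ frontier Q = frontier (Iminus r Q) :=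
  interior_eq_Iminus_of_pastConvex_general (fun q _ => hopen.preimage (Continuous.prodMk_left q))
    (fun x _ => hfd x) (fun q _ => hpd q) hQ
end

section
/- Let M be a locally connected topological space and ≪ a transitive binary relation on M whose graph is open in M × M and which is future-dense and past-dense. Let (P_k)_{k∈ℕ} be a sequence of past sets (I⁻(P_k) = P_k for all k) whose Hausdorff closed limit Π_∞ exists. Then the sequence of topological boundaries A_k := ∂P_k has a Hausdorff closed limit, and this limit equals ∂Π_∞, which in turn equals ∂(interior(Π_∞)). -/
/-!
Let `Π` be the lower limit of sets `P k` closed under passing to the past. If `p ≪ q` and `q ∈ Π`,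
openness of `≪` gives neighbourhoods `U` of `p` and `V` of `q` with every point of `U` before every
point of `V`; almost every `P k` meets `V` and therefore contains all of `U`. Hence `I⁻(Π)` is an
open subset of `Π`, so past-density makes `Π` the closure of its interior, and future-density
gives `interior Π ⊆ I⁻(Π)`, so every interior point of `Π` has a neighbourhood which misses almost
every `∂(P k)`. Conversely, if `Π` is also the upper limit, a connected neighbourhood of a point of
`∂Π` meets almost every `P k` and contains a point outside almost every `P k`, so it meets almost
every `∂(P k)`.
-/

open Filter Set Topology

section HausdorffLimits

variable {M : Type*} [TopologicalSpace M] {S T : ℕ → Set M} {p : M}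

lemma mem_hausdorffLowerLimit_iff :
    p ∈ hausdorffLowerLimit S ↔ ∀ U ∈ 𝓝 p, ∀ᶠ k in atTop, (U ∩ S k).Nonempty := by
  simp only [← Nat.cofinite_eq_atTop]
  rfl

lemma mem_hausdorffUpperLimit_iff :
    p ∈ hausdorffUpperLimit S ↔ ∀ U ∈ 𝓝 p, ∃ᶠ k in atTop, (U ∩ S k).Nonempty := by
  simp only [Nat.frequently_atTop_iff_infinite]
  rfl

lemma notMem_hausdorffUpperLimit_iff :
    p ∉ hausdorffUpperLimit S ↔ ∃ U ∈ 𝓝 p, ∀ᶠ k in atTop, Disjoint U (S k) := by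
  simp only [mem_hausdorffUpperLimit_iff, ← not_disjoint_iff_nonempty_inter, not_forall,
    not_frequently, not_not, exists_prop]

lemma hausdorffLowerLimit_subset_hausdorffUpperLimit (S : ℕ → Set M) :
    hausdorffLowerLimit S ⊆ hausdorffUpperLimit S := fun _ hp =>
  mem_hausdorffUpperLimit_iff.2 fun U hU => (mem_hausdorffLowerLimit_iff.1 hp U hU).frequently

lemma isClosed_hausdorffLowerLimit (S : ℕ → Set M) : IsClosed (hausdorffLowerLimit S) := by
  refine isClosed_of_closure_subset fun p hp => mem_hausdorffLowerLimit_iff.2 fun U hU => ?_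
  obtain ⟨q, hqU, hq⟩ := mem_closure_iff_nhds.1 hp _ (interior_mem_nhds.2 hU)
  exact mem_hausdorffLowerLimit_iff.1 hq U (mem_interior_iff_mem_nhds.1 hqU)

lemma hausdorffUpperLimit_mono (hST : ∀ k, S k ⊆ T k) :
    hausdorffUpperLimit S ⊆ hausdorffUpperLimit T := fun _ hp =>
  mem_hausdorffUpperLimit_iff.2 fun U hU => (mem_hausdorffUpperLimit_iff.1 hp U hU).mono
    fun k hk => hk.mono (inter_subset_inter_right U (hST k))

lemma hausdorffUpperLimit_closure (S : ℕ → Set M) :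
    hausdorffUpperLimit (fun k => closure (S k)) = hausdorffUpperLimit S := by
  refine Subset.antisymm (fun p => ?_) (hausdorffUpperLimit_mono fun _ => subset_closure)
  contrapose
  rw [notMem_hausdorffUpperLimit_iff, notMem_hausdorffUpperLimit_iff]
  rintro ⟨U, hU, hdisj⟩
  exact ⟨interior U, interior_mem_nhds.2 hU,
    hdisj.mono fun _ hk => (hk.mono_left interior_subset).closure_right isOpen_interior⟩

lemma hausdorffUpperLimit_frontier_subset (S : ℕ → Set M) :
    hausdorffUpperLimit (fun k => frontier (S k)) ⊆ hausdorffUpperLimit S :=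
  (hausdorffUpperLimit_mono fun _ => frontier_subset_closure).trans
    (hausdorffUpperLimit_closure S).subset

lemma inter_frontier_nonempty_of_isPreconnected {V A : Set M} (hV : IsPreconnected V)
    (hA : (V ∩ A).Nonempty) (hAc : (V ∩ Aᶜ).Nonempty) : (V ∩ frontier A).Nonempty := by
  by_contra hne
  have hcover : V ⊆ interior A ∪ interior Aᶜ := by
    rw [← compl_frontier_eq_union_interior, subset_compl_iff_disjoint_right]
    exact not_not.1 (mt not_disjoint_iff_nonempty_inter.1 hne)
  have hdisj : Disjoint (interior A) (interior Aᶜ) :=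
    disjoint_compl_right.mono interior_subset interior_subset
  obtain ⟨a, haV, ha⟩ := hA
  obtain ⟨b, hbV, hb⟩ := hAc
  have haA : a ∈ interior A := (hcover haV).resolve_right fun h => interior_subset h ha
  have hVA : V ⊆ interior A :=
    hV.subset_left_of_subset_union isOpen_interior isOpen_interior hdisj hcover ⟨a, haV, haA⟩
  exact hb (interior_subset (hVA hbV))

lemma hausdorffLowerLimit_sdiff_interior_subset [LocallyConnectedSpace M] (S : ℕ → Set M) :
    hausdorffLowerLimit S \ interior (hausdorffUpperLimit S) ⊆
      hausdorffLowerLimit (fun k => frontier (S k)) := by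
  rintro p ⟨hp, hpi⟩
  refine mem_hausdorffLowerLimit_iff.2 fun U hU => ?_
  obtain ⟨V, hVU, hVopen, hpV, hVconn⟩ :=
    locallyConnectedSpace_iff_subsets_isOpen_isConnected.1 ‹_› p U hU
  obtain ⟨y, hyV, hy⟩ : ∃ y ∈ V, y ∉ hausdorffUpperLimit S :=
    not_subset.1 fun h => hpi (interior_maximal h hVopen hpV)
  obtain ⟨W, hW, hWdisj⟩ := notMem_hausdorffUpperLimit_iff.1 hy
  filter_upwards [mem_hausdorffLowerLimit_iff.1 hp V (hVopen.mem_nhds hpV), hWdisj]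
    with k hVk hWk
  have hyk : y ∉ S k := disjoint_left.1 hWk (mem_of_mem_nhds hW)
  exact (inter_frontier_nonempty_of_isPreconnected hVconn.isPreconnected hVk ⟨y, hyV, hyk⟩).mono
    (inter_subset_inter_left _ hVU)

end HausdorffLimits

section Past

variable {M : Type*} [TopologicalSpace M] {r : M → M → Prop}

lemma isOpen_iminus (hopen : IsOpen {p : M × M | r p.1 p.2}) (A : Set M) :
    IsOpen (Iminus r A) := by
  have hunion : Iminus r A = ⋃ s ∈ A, {x | r x s} := by
    ext x
    simp [Iminus]
  rw [hunion]
  exact isOpen_biUnion fun s _ => hopen.preimage (Continuous.prodMk_left s)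

lemma subset_closure_iminus (hpd : ∀ x : M, x ∈ closure {y | r y x}) (A : Set M) :
    A ⊆ closure (Iminus r A) := by
  intro a ha
  have hsub : {y | r y a} ⊆ Iminus r A := fun _ hya => ⟨a, ha, hya⟩
  exact closure_mono hsub (hpd a)

lemma interior_subset_iminus (hfd : ∀ x : M, x ∈ closure {y | r x y}) (A : Set M) :
    interior A ⊆ Iminus r A := by
  intro x hx
  obtain ⟨y, hyA, hxy⟩ := mem_closure_iff.1 (hfd x) _ isOpen_interior hx
  exact ⟨y, interior_subset hyA, hxy⟩

variable {P : ℕ → Set M}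

lemma exists_mem_nhds_eventually_subset_of_mem_iminus (hopen : IsOpen {p : M × M | r p.1 p.2})
    (hP : ∀ k, Iminus r (P k) ⊆ P k) {p : M} (hp : p ∈ Iminus r (hausdorffLowerLimit P)) :
    ∃ U ∈ 𝓝 p, ∀ᶠ k in atTop, U ⊆ P k := by
  obtain ⟨q, hq, hpq⟩ := hp
  obtain ⟨U, hU, V, hV, hUV⟩ := mem_nhds_prod_iff.1 (hopen.mem_nhds hpq)
  refine ⟨U, hU, ?_⟩
  filter_upwards [mem_hausdorffLowerLimit_iff.1 hq V hV] with k ⟨s, hsV, hs⟩ x hxU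
  exact hP k ⟨s, hs, hUV (mk_mem_prod hxU hsV)⟩

lemma iminus_hausdorffLowerLimit_subset (hopen : IsOpen {p : M × M | r p.1 p.2})
    (hP : ∀ k, Iminus r (P k) ⊆ P k) :
    Iminus r (hausdorffLowerLimit P) ⊆ hausdorffLowerLimit P := by
  intro p hp
  obtain ⟨U, hU, hUP⟩ := exists_mem_nhds_eventually_subset_of_mem_iminus hopen hP hp
  refine mem_hausdorffLowerLimit_iff.2 fun V hV => ?_
  filter_upwards [hUP] with k hk
  exact ⟨p, mem_of_mem_nhds hV, hk (mem_of_mem_nhds hU)⟩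

lemma closure_interior_hausdorffLowerLimit (hopen : IsOpen {p : M × M | r p.1 p.2})
    (hpd : ∀ x : M, x ∈ closure {y | r y x}) (hP : ∀ k, Iminus r (P k) ⊆ P k) :
    closure (interior (hausdorffLowerLimit P)) = hausdorffLowerLimit P := by
  refine (isClosed_hausdorffLowerLimit P).closure_interior_subset.antisymm ?_
  have hint : Iminus r (hausdorffLowerLimit P) ⊆ interior (hausdorffLowerLimit P) :=
    interior_maximal (iminus_hausdorffLowerLimit_subset hopen hP) (isOpen_iminus hopen _)
  exact (subset_closure_iminus hpd _).trans (closure_mono hint)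

lemma disjoint_hausdorffUpperLimit_frontier_iminus (hopen : IsOpen {p : M × M | r p.1 p.2})
    (hP : ∀ k, Iminus r (P k) ⊆ P k) :
    Disjoint (hausdorffUpperLimit fun k => frontier (P k))
      (Iminus r (hausdorffLowerLimit P)) := by
  refine disjoint_right.2 fun p hp => notMem_hausdorffUpperLimit_iff.2 ?_
  obtain ⟨U, hU, hUP⟩ := exists_mem_nhds_eventually_subset_of_mem_iminus hopen hP hp
  exact ⟨interior U, interior_mem_nhds.2 hU,
    hUP.mono fun _ hk => disjoint_interior_frontier.mono_left (interior_mono hk)⟩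

lemma hausdorffUpperLimit_frontier_subset_sdiff_interior
    (hopen : IsOpen {p : M × M | r p.1 p.2}) (hfd : ∀ x : M, x ∈ closure {y | r x y})
    (hP : ∀ k, Iminus r (P k) ⊆ P k) :
    hausdorffUpperLimit (fun k => frontier (P k)) ⊆
      hausdorffUpperLimit P \ interior (hausdorffLowerLimit P) :=
  subset_sdiff.2 ⟨hausdorffUpperLimit_frontier_subset P,
    (disjoint_hausdorffUpperLimit_frontier_iminus hopen hP).mono_right
      (interior_subset_iminus hfd _)⟩

end Past

theorem hausdorffLimit_of_boundaries_general {M : Type*} [TopologicalSpace M]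
    [LocallyConnectedSpace M]
    (r : M → M → Prop)
    (hopen : IsOpen {p : M × M | r p.1 p.2})
    (hfd : ∀ x : M, x ∈ closure {y | r x y})
    (hpd : ∀ x : M, x ∈ closure {y | r y x})
    (P : ℕ → Set M) (hP : ∀ k, Iminus r (P k) ⊆ P k)
    (PiInf : Set M)
    (hup : hausdorffUpperLimit P = PiInf) (hlow : hausdorffLowerLimit P = PiInf) :
    hausdorffUpperLimit (fun k => frontier (P k)) = frontier PiInf ∧
    hausdorffLowerLimit (fun k => frontier (P k)) = frontier PiInf ∧
    frontier PiInf = frontier (interior PiInf) := by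
  have hreg : closure (interior PiInf) = PiInf :=
    hlow ▸ closure_interior_hausdorffLowerLimit hopen hpd hP
  have hfrontier : frontier PiInf = PiInf \ interior PiInf :=
    (hlow ▸ isClosed_hausdorffLowerLimit P : IsClosed PiInf).frontier_eq
  have hupper : hausdorffUpperLimit (fun k => frontier (P k)) ⊆ frontier PiInf := by
    simpa only [hup, hlow, ← hfrontier] using
      hausdorffUpperLimit_frontier_subset_sdiff_interior hopen hfd hP
  have hlower : frontier PiInf ⊆ hausdorffLowerLimit (fun k => frontier (P k)) := by
    simpa only [hup, hlow, ← hfrontier] using hausdorffLowerLimit_sdiff_interior_subset P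
  have hle := hausdorffLowerLimit_subset_hausdorffUpperLimit fun k => frontier (P k)
  refine ⟨hupper.antisymm (hlower.trans hle), (hle.trans hupper).antisymm hlower, ?_⟩
  rw [hfrontier, isOpen_interior.frontier_eq, hreg]

theorem hausdorffLimit_of_boundaries {M : Type*} [TopologicalSpace M]
    [LocallyConnectedSpace M]
    (r : M → M → Prop)
    (htrans : Transitive r)
    (hopen : IsOpen {p : M × M | r p.1 p.2})
    (hfd : ∀ x : M, x ∈ closure {y | r x y})
    (hpd : ∀ x : M, x ∈ closure {y | r y x})
    (P : ℕ → Set M) (hP : ∀ k, Iminus r (P k) = P k)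
    (PiInf : Set M)
    (hup : hausdorffUpperLimit P = PiInf) (hlow : hausdorffLowerLimit P = PiInf) :
    hausdorffUpperLimit (fun k => frontier (P k)) = frontier PiInf ∧
    hausdorffLowerLimit (fun k => frontier (P k)) = frontier PiInf ∧
    frontier PiInf = frontier (interior PiInf) :=
  hausdorffLimit_of_boundaries_general r hopen hfd hpd P (fun k => (hP k).subset) PiInf hup hlow
end

section
/- Let n > 0 be a real number, and let H : ℝ → ℝ be differentiable at every point of [0, ∞), with derivative satisfying H′(t) ≥ H(t)²/n − n for all t ≥ 0. If H(0) ≥ n, then H(t) = n for all t ≥ 0. -/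
/-!
For `H' ≥ c (H - α) (H - β)` with `β ≤ α`, the excess `u = H - α` satisfies
`u' ≥ c (α - β) u + c u²`. Grönwall's inequality applied to `-u` keeps `u` nonnegative, so the
linear term can be dropped and `u' ≥ c u²` remains. Where `u > 0` this says `(1 / u)' ≤ -c`, so a
positive value of `u` at time `t` would force `u` to blow up by time `t + 1 / (c u t)`.
-/

open Set

section RightDerivative

variable {u u' : ℝ → ℝ} {a b c k : ℝ}

theorem nonneg_of_mul_le_deriv_right (hu : ContinuousOn u (Icc a b))
    (hu' : ∀ t ∈ Ico a b, HasDerivWithinAt u (u' t) (Ici t) t)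
    (hbound : ∀ t ∈ Ico a b, k * u t ≤ u' t) (ha : 0 ≤ u a) :
    ∀ t ∈ Icc a b, 0 ≤ u t := by
  intro t ht
  have hgronwall : -u t ≤ gronwallBound 0 k 0 (t - a) :=
    le_gronwallBound_of_liminf_deriv_right_le hu.neg
      (fun s hs _ hr => (hu' s hs).neg.liminf_right_slope_le hr) (neg_nonpos.mpr ha)
      (fun s hs => by
        simpa only [Pi.neg_apply, mul_neg, add_zero, neg_le_neg_iff] using hbound s hs)
      t ht
  rwa [gronwallBound_ε0_δ0, neg_nonpos] at hgronwall

theorem inv_le_inv_sub_of_mul_sq_le_deriv_right (hab : a ≤ b) (hu : ContinuousOn u (Icc a b))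
    (hu' : ∀ t ∈ Ico a b, HasDerivWithinAt u (u' t) (Ici t) t)
    (hbound : ∀ t ∈ Ico a b, c * u t ^ 2 ≤ u' t) (hpos : ∀ t ∈ Icc a b, 0 < u t) :
    (u b)⁻¹ ≤ (u a)⁻¹ - c * (b - a) := by
  have hline : ∀ t, HasDerivAt (fun s => (u a)⁻¹ - c * (s - a)) (-c) t := fun t => by
    simpa only [mul_one] using (((hasDerivAt_id' t).sub_const a).const_mul c).const_sub (u a)⁻¹
  have hslope : ∀ t ∈ Ico a b, -u' t / u t ^ 2 ≤ -c := fun t ht => by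
    have hut := hpos t (Ico_subset_Icc_self ht)
    rw [div_le_iff₀ (by positivity)]
    linarith [hbound t ht]
  exact image_le_of_deriv_right_le_deriv_boundary
    (hu.inv₀ fun t ht => (hpos t ht).ne')
    (fun t ht => (hu' t ht).inv (hpos t (Ico_subset_Icc_self ht)).ne')
    (by simp) (fun t _ => (hline t).continuousAt.continuousWithinAt)
    (fun t _ => (hline t).hasDerivWithinAt) hslope (right_mem_Icc.mpr hab)

theorem mul_sub_lt_inv_of_mul_sq_le_deriv_right (hc : 0 ≤ c) (hab : a ≤ b)
    (hu : ContinuousOn u (Icc a b))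
    (hu' : ∀ t ∈ Ico a b, HasDerivWithinAt u (u' t) (Ici t) t)
    (hbound : ∀ t ∈ Ico a b, c * u t ^ 2 ≤ u' t) (ha : 0 < u a) :
    c * (b - a) < (u a)⁻¹ := by
  have hpos : ∀ t ∈ Icc a b, 0 < u t := fun t ht =>
    ha.trans_le <| image_le_of_deriv_right_le_deriv_boundary continuousOn_const
      (fun s _ => hasDerivWithinAt_const s (Ici s) (u a)) le_rfl hu hu'
      (fun s hs => (by positivity : 0 ≤ c * u s ^ 2).trans (hbound s hs)) ht
  have hinv := inv_le_inv_sub_of_mul_sq_le_deriv_right hab hu hu' hbound hpos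
  have hinv_pos : 0 < (u b)⁻¹ := inv_pos.mpr (hpos b (right_mem_Icc.mpr hab))
  linarith

theorem nonpos_of_mul_sq_le_deriv_right (hc : 0 < c) (hu : ContinuousOn u (Ici a))
    (hu' : ∀ t ∈ Ici a, HasDerivWithinAt u (u' t) (Ici t) t)
    (hbound : ∀ t ∈ Ici a, c * u t ^ 2 ≤ u' t) :
    ∀ t ∈ Ici a, u t ≤ 0 := by
  intro t ht
  by_contra! hut
  have hsub : Ici t ⊆ Ici a := Ici_subset_Ici.mpr ht
  have hlifespan : c * (t + (u t)⁻¹ / c - t) < (u t)⁻¹ :=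
    mul_sub_lt_inv_of_mul_sq_le_deriv_right hc.le (le_add_of_nonneg_right (by positivity))
      (hu.mono (Icc_subset_Ici_self.trans hsub))
      (fun s hs => hu' s (hsub hs.1)) (fun s hs => hbound s (hsub hs.1)) hut
  rw [add_sub_cancel_left, mul_div_cancel₀ _ hc.ne'] at hlifespan
  exact hlifespan.false

end RightDerivative

theorem riccati_rigidity_general {H H' : ℝ → ℝ} {a c α β : ℝ} (hc : 0 < c) (hβα : β ≤ α)
    (hH : ContinuousOn H (Ici a))
    (hH' : ∀ t ∈ Ici a, HasDerivWithinAt H (H' t) (Ici t) t)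
    (hbound : ∀ t ∈ Ici a, c * ((H t - α) * (H t - β)) ≤ H' t) (ha : α ≤ H a) :
    ∀ t ∈ Ici a, H t = α := by
  have hu : ContinuousOn (fun t => H t - α) (Ici a) := hH.sub continuousOn_const
  have hu' : ∀ t ∈ Ici a, HasDerivWithinAt (fun s => H s - α) (H' t) (Ici t) t :=
    fun t ht => (hH' t ht).sub_const α
  have hexcess : ∀ t ∈ Ici a, c * (α - β) * (H t - α) + c * (H t - α) ^ 2 ≤ H' t :=
    fun t ht => by linear_combination hbound t ht
  have hnonneg : ∀ t ∈ Ici a, 0 ≤ H t - α := fun t ht =>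
    nonneg_of_mul_le_deriv_right (k := c * (α - β)) (hu.mono Icc_subset_Ici_self)
      (fun s hs => hu' s hs.1)
      (fun s hs => (le_add_of_nonneg_right (by positivity)).trans (hexcess s hs.1))
      (sub_nonneg.mpr ha) t (right_mem_Icc.mpr ht)
  have hsq : ∀ t ∈ Ici a, c * (H t - α) ^ 2 ≤ H' t := fun t ht =>
    (le_add_of_nonneg_left
      (mul_nonneg (mul_nonneg hc.le (sub_nonneg.mpr hβα)) (hnonneg t ht))).trans (hexcess t ht)
  intro t ht
  exact sub_eq_zero.mp
    (le_antisymm (nonpos_of_mul_sq_le_deriv_right hc hu hu' hsq t ht) (hnonneg t ht))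

theorem riccati_rigidity (n : ℝ) (hn : 0 < n) (H : ℝ → ℝ)
    (hdiff : ∀ t ∈ Set.Ici (0 : ℝ), DifferentiableAt ℝ H t)
    (hderiv : ∀ t ∈ Set.Ici (0 : ℝ), deriv H t ≥ H t ^ 2 / n - n)
    (h0 : H 0 ≥ n) :
    ∀ t ∈ Set.Ici (0 : ℝ), H t = n := by
  have hroots : ∀ x : ℝ, n⁻¹ * ((x - n) * (x - -n)) = x ^ 2 / n - n := fun x => by
    field_simp
    ring
  exact riccati_rigidity_general (inv_pos.mpr hn) (neg_le_self hn.le)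
    (fun t ht => (hdiff t ht).continuousAt.continuousWithinAt)
    (fun t ht => (hdiff t ht).hasDerivAt.hasDerivWithinAt)
    (fun t ht => (hroots (H t)).trans_le (hderiv t ht)) h0
end
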